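/- Let π: F_2[a,b,c,d,e,f] → F_2[x,y,z] be the F_2-algebra homomorphism with π(a) = x, π(b) = y, π(c) = z and π(d) = π(e) = π(f) = 0. Then π maps the invariant ring S[W'^*]^G surjectively onto the full invariant ring F_2[x,y,z]^{GL_3(F_2)} of the action of GL_3(F_2) on F_2[x,y,z] by linear substitution of the variables (the Dickson algebra, a polynomial ring on generators of degrees 4, 6, 7): every GL_3(F_2)-invariant polynomial in F_2[x,y,z] is the image under π of some element of S[W'^*]^G. -/

import Mathlib

set_option synthInstance.maxHeartbeats 1000000
set_option maxHeartbeats 1000000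

open MvPolynomial

/-- The field with two elements. -/
abbrev F2 := ZMod 2

/-- `G = GL₃(𝔽₂)`. -/
abbrev G3 := GL (Fin 3) F2

/-- The generator `A` of `G`. -/
def Agen : G3 := ⟨!![1,0,1; 0,1,0; 0,0,1], !![1,0,1; 0,1,0; 0,0,1], by decide, by decide⟩

/-- The generator `B` of `G`. -/
def Bgen : G3 := ⟨!![0,0,1; 1,0,0; 0,1,0], !![0,1,0; 0,0,1; 1,0,0], by decide, by decide⟩

/-- The matrix `D(A)` of the action on `W'^* = 𝔽₂⁶`. -/
def DA6 : Matrix (Fin 6) (Fin 6) F2 :=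
  !![1,0,1,0,0,1; 0,1,0,0,0,0; 0,0,1,0,0,0; 0,0,0,1,1,0; 0,0,0,0,1,0; 0,0,0,0,0,1]

/-- The matrix `D(B)` of the action on `W'^* = 𝔽₂⁶`. -/
def DB6 : Matrix (Fin 6) (Fin 6) F2 :=
  !![0,0,1,0,0,0; 1,0,0,0,0,0; 0,1,0,0,0,0; 0,0,0,0,0,1; 0,0,0,1,0,0; 0,0,0,0,1,0]

/-- The algebra endomorphism of `S[W'^*] = 𝔽₂[a,b,c,d,e,f]` induced by the right action of
`σ` on the linear forms (coefficient row vectors are multiplied on the right by `D σ`; in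
particular the variable `Xᵢ` is sent to the linear form given by the `i`-th row of `D σ`). -/
noncomputable def polyAct (D : G3 →* GL (Fin 6) F2) (σ : G3) :
    MvPolynomial (Fin 6) F2 →ₐ[F2] MvPolynomial (Fin 6) F2 :=
  aeval (fun i => ∑ j, (D σ : Matrix (Fin 6) (Fin 6) F2) i j • X j)

/-- The invariant ring `S[W'^*]^H` for a subgroup `H ≤ G`. -/
noncomputable def invH (D : G3 →* GL (Fin 6) F2) (H : Subgroup G3) :
    Subalgebra F2 (MvPolynomial (Fin 6) F2) where
  carrier := {p | ∀ σ ∈ H, polyAct D σ p = p}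
  mul_mem' := fun ha hb σ hσ => by rw [map_mul, ha σ hσ, hb σ hσ]
  add_mem' := fun ha hb σ hσ => by rw [map_add, ha σ hσ, hb σ hσ]
  one_mem' := fun σ _ => map_one _
  zero_mem' := fun σ _ => map_zero _
  algebraMap_mem' := fun r σ _ => AlgHom.commutes _ r

/-- The invariant ring `S[W'^*]^G`. -/
noncomputable def invG (D : G3 →* GL (Fin 6) F2) :
    Subalgebra F2 (MvPolynomial (Fin 6) F2) :=
  invH D ⊤

/-- The `𝔽₂`-algebra homomorphism `π : 𝔽₂[a,b,c,d,e,f] → 𝔽₂[x,y,z]` with `π(a) = x`,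
`π(b) = y`, `π(c) = z` and `π(d) = π(e) = π(f) = 0`. -/
noncomputable def piMap : MvPolynomial (Fin 6) F2 →ₐ[F2] MvPolynomial (Fin 3) F2 :=
  aeval ![X 0, X 1, X 2, 0, 0, 0]

/-- Dickson degree four. -/
def dk4 {R : Type*} [CommRing R] (x y z : R) : R :=
  x^4 + x^2*y^2 + x^2*y*z + x^2*z^2 + x*y^2*z + x*y*z^2 + y^4 + y^2*z^2 + z^4

def dk6 {R : Type*} [CommRing R] (x y z : R) : R :=
  x^4*y^2 + x^2*y^4 + x^4*z^2 + x^2*z^4 + y^4*z^2 + y^2*z^4 + x^4*y*z + x*y^4*z + x*y*z^4 +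
    x^2*y^2*z^2

def dk7 {R : Type*} [CommRing R] (x y z : R) : R :=
  x * y * (x + y) * z * (x + z) * (y + z) * (x + y + z)

def lift4 {R : Type*} [CommRing R] (a b c d e f : R) : R :=
  a^4 + a^3*e + a^2*b^2 + a^2*b*c + a^2*b*e + a^2*b*f + a^2*c^2 + a^2*c*d + a^2*c*e + a^2*d^2 +
  a^2*d*e + a^2*d*f + a^2*e*f + a^2*f^2 + a*b^2*c + a*b^2*e + a*b^2*f + a*b*c^2 + a*b*e^2 +
  a*b*e*f + a*b*f^2 + a*c^2*d + a*c^2*e + a*c*d^2 + a*c*d*e + a*c*e^2 + a*d^2*f + a*d*e*f +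
  a*d*f^2 + b^4 + b^3*f + b^2*c^2 + b^2*c*d + b^2*c*f + b^2*d^2 + b^2*d*e + b^2*d*f + b^2*e^2 +
  b^2*e*f + b*c^2*d + b*c^2*f + b*c*d^2 + b*c*d*f + b*c*f^2 + b*d^2*e + b*d*e^2 + b*d*e*f + c^4 +
  c^3*d + c^2*d*e + c^2*d*f + c^2*e^2 + c^2*e*f + c^2*f^2 + c*d*e*f + c*e^2*f + c*e*f^2

theorem lift4_A {R : Type*} [CommRing R] [CharP R 2] (a b c d e f : R) :
    lift4 (a + c + f) b c (d + e) e f = lift4 a b c d e f := by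
  unfold lift4; grind

theorem lift4_B {R : Type*} [CommRing R] (a b c d e f : R) :
    lift4 c a b f d e = lift4 a b c d e f := by
  unfold lift4; ring

theorem lift4_pi {R : Type*} [CommRing R] (x y z : R) :
    lift4 x y z 0 0 0 = dk4 x y z := by
  unfold lift4 dk4; ring

theorem dk4_sq {R : Type*} [CommRing R] [CharP R 2] (x y z t : R) :
    dk4 (x + t * x^2) (y + t * y^2) (z + t * z^2) =
      dk4 x y z + t ^ 2 * dk6 x y z + t^3 * dk7 x y z + t^4 * (dk4 x y z)^2 := by
  unfold dk4 dk6 dk7; grind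

/-- Linear substitution. -/
noncomputable def TT {n : ℕ} (M : Matrix (Fin n) (Fin n) F2) :
    MvPolynomial (Fin n) F2 →ₐ[F2] MvPolynomial (Fin n) F2 :=
  aeval (fun i => ∑ j, M i j • X j)

theorem TT_mul {n : ℕ} (M N : Matrix (Fin n) (Fin n) F2) (p : MvPolynomial (Fin n) F2) :
    TT (M * N) p = TT N (TT M p) := by
  have : TT (M * N) = (TT N).comp (TT M) := by
    apply MvPolynomial.algHom_ext
    intro i
    simp only [TT, AlgHom.comp_apply, aeval_X, map_sum, map_smul, Matrix.mul_apply,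
      Finset.sum_smul, Finset.smul_sum, smul_smul]
    exact Finset.sum_comm
  rw [this]; rfl

theorem TT_one {n : ℕ} (p : MvPolynomial (Fin n) F2) :
    TT (1 : Matrix (Fin n) (Fin n) F2) p = p := by
  have : TT (1 : Matrix (Fin n) (Fin n) F2) = AlgHom.id F2 _ := by
    apply MvPolynomial.algHom_ext
    intro i
    simp [TT, Matrix.one_apply]
  rw [this]; rfl

/-- Stabiliser. -/
def stabG {n : ℕ} (D : G3 →* GL (Fin n) F2) (p : MvPolynomial (Fin n) F2) : Subgroup G3 where
  carrier := {σ | TT (D σ : Matrix (Fin n) (Fin n) F2) p = p}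
  mul_mem' := by
    intro a b ha hb
    simp only [Set.mem_ofPred_eq] at *
    rw [map_mul, Units.val_mul, TT_mul, ha, hb]
  one_mem' := by simp [TT_one]
  inv_mem' := by
    intro a ha
    simp only [Set.mem_ofPred_eq] at *
    conv_lhs => rw [← ha]
    rw [← TT_mul, ← Units.val_mul, ← map_mul, mul_inv_cancel, map_one, Units.val_one, TT_one]

theorem gen_top (H : Subgroup G3) (hA : Agen ∈ H) (hB : Bgen ∈ H) (σ : G3) : σ ∈ H := by
  have key : ∀ M : Matrix (Fin 3) (Fin 3) F2, M.det ≠ 0 →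
      ∀ σ : G3, (σ : Matrix (Fin 3) (Fin 3) F2) = M → σ ∈ H := by
    intro M hM
    refine Matrix.diagonal_transvection_induction_of_det_ne_zero
      (fun M => ∀ σ : G3, (σ : Matrix (Fin 3) (Fin 3) F2) = M → σ ∈ H) M hM ?_ ?_ ?_
    · intro d hd τ hτ
      have : τ = 1 := by
        apply Units.ext
        rw [hτ, Units.val_one]
        rw [Matrix.det_diagonal, Finset.prod_ne_zero_iff] at hd
        have h2 : ∀ a : F2, a ≠ 0 → a = 1 := by decide
        have : d = 1 := funext fun i => h2 _ (hd i (Finset.mem_univ _))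
        rw [this]; exact Matrix.diagonal_one
      rw [this]; exact H.one_mem
    · rintro ⟨i, j, hij, c⟩ τ hτ
      have h1 : Bgen⁻¹ * Agen * Bgen ∈ H := H.mul_mem (H.mul_mem (H.inv_mem hB) hA) hB
      have h2 : Bgen * Agen * Bgen⁻¹ ∈ H := H.mul_mem (H.mul_mem hB hA) (H.inv_mem hB)
      have hc : ∀ a ∈ H, ∀ b ∈ H, a * b * a * b ∈ H := fun a ha b hb =>
        H.mul_mem (H.mul_mem (H.mul_mem ha hb) ha) hb
      have h3 := hc _ h1 _ hA
      have h4 := hc _ h2 _ hA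
      have h5 := hc _ h1 _ h2
      have fin : ∀ ρ : G3, ρ ∈ H → (ρ : Matrix (Fin 3) (Fin 3) F2) =
          (τ : Matrix (Fin 3) (Fin 3) F2) → τ ∈ H := by
        intro ρ hρ h; rwa [← Units.ext h]
      rcases (by decide : ∀ a : F2, a = 0 ∨ a = 1) c with rfl | rfl
      · refine fin 1 H.one_mem ?_
        rw [hτ]; simp [Matrix.TransvectionStruct.toMatrix]
      · change (τ : Matrix (Fin 3) (Fin 3) F2) = Matrix.transvection i j 1 at hτ
        fin_cases i <;> fin_cases j <;> first
          | exact absurd rfl hij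
          | (refine fin _ hA ?_; rw [hτ]; decide)
          | (refine fin _ h1 ?_; rw [hτ]; decide)
          | (refine fin _ h2 ?_; rw [hτ]; decide)
          | (refine fin _ h3 ?_; rw [hτ]; decide)
          | (refine fin _ h4 ?_; rw [hτ]; decide)
          | (refine fin _ h5 ?_; rw [hτ]; decide)
    · intro A B hA hB iA iB τ hτ
      have := Units.ext (hτ.trans rfl : (τ : Matrix (Fin 3) (Fin 3) F2) =
        ((Matrix.GeneralLinearGroup.mkOfDetNeZero A hA *
          Matrix.GeneralLinearGroup.mkOfDetNeZero B hB : G3) : Matrix (Fin 3) (Fin 3) F2))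
      rw [this]
      exact H.mul_mem (iA _ rfl) (iB _ rfl)
  exact key _ (by
    have := (Matrix.isUnit_iff_isUnit_det _).1 (σ.isUnit); exact this.ne_zero) σ rfl

/-- Three variable ring. -/
abbrev R3 := MvPolynomial (Fin 3) F2

/-- The elementary substitution. -/
noncomputable def tau (i j : Fin 3) : R3 →ₐ[F2] R3 := aeval (Function.update X i (X i + X j))

/-- Setting one variable to zero. -/
noncomputable def rho (j : Fin 3) : R3 →ₐ[F2] R3 := aeval (Function.update X j 0)

theorem tau_X_self (i j : Fin 3) : tau i j (X i) = X i + X j := by simp [tau]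

theorem tau_X_ne {i j k : Fin 3} (h : k ≠ i) : tau i j (X k) = X k := by simp [tau, h]

theorem rho_X_self (j : Fin 3) : rho j (X j) = 0 := by simp [rho]

theorem rho_X_ne {j k : Fin 3} (h : k ≠ j) : rho j (X k) = X k := by simp [rho, h]

theorem two_R3 (p : R3) : p + p = 0 := CharTwo.add_self_eq_zero p

theorem dvd_sub_rho (j : Fin 3) (p : R3) : X j ∣ p - rho j p := by
  induction p using MvPolynomial.induction_on with
  | C a => simp [rho]
  | add p q hp hq =>
    rw [map_add, add_sub_add_comm]; exact dvd_add hp hq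
  | mul_X p k hp =>
    rw [map_mul]
    by_cases h : k = j
    · subst h; rw [rho_X_self]; simp
    · rw [rho_X_ne h, ← sub_mul]; exact hp.mul_right _

theorem dvd_of_rho {j : Fin 3} {p : R3} (h : rho j p = 0) : X j ∣ p := by
  simpa [h] using dvd_sub_rho j p

theorem rho_rho (j : Fin 3) (p : R3) : rho j (rho j p) = rho j p := by
  have : (rho j).comp (rho j) = rho j := by
    apply MvPolynomial.algHom_ext
    intro k
    by_cases h : k = j
    · subst h; simp [rho_X_self]
    · simp [rho_X_ne h]
  exact DFunLike.congr_fun this p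

theorem tau_tau {i j : Fin 3} (hij : i ≠ j) (p : R3) : tau i j (tau i j p) = p := by
  have : (tau i j).comp (tau i j) = AlgHom.id F2 R3 := by
    apply MvPolynomial.algHom_ext
    intro k
    by_cases h : k = i
    · subst h
      rw [AlgHom.comp_apply, tau_X_self, map_add, tau_X_self, tau_X_ne hij.symm, add_assoc, two_R3]
      simp
    · simp [tau_X_ne h]
  exact DFunLike.congr_fun this p

theorem pderiv_tau {i j : Fin 3} (hij : i ≠ j) (p : R3) :
    pderiv j (tau i j p) = tau i j (pderiv i p) + tau i j (pderiv j p) := by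
  induction p using MvPolynomial.induction_on with
  | C a => simp [tau]
  | add p q hp hq => simp only [map_add, hp, hq]; ring
  | mul_X p k hp =>
    simp only [map_mul, Derivation.leibniz, smul_eq_mul, map_add, hp]
    by_cases h : k = i
    · subst h
      simp only [tau_X_self, map_add, pderiv_X_self, pderiv_X_of_ne hij,
        map_one, map_zero]
      ring
    · rw [tau_X_ne h, pderiv_X_of_ne h]
      by_cases h' : k = j
      · subst h'; simp only [pderiv_X_self, map_one, map_zero]; ring
      · rw [pderiv_X_of_ne h']; simp only [map_zero]; ring

theorem pderiv_rho {i j : Fin 3} (hij : i ≠ j) (p : R3) :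
    pderiv i (rho j p) = rho j (pderiv i p) := by
  induction p using MvPolynomial.induction_on with
  | C a => simp [rho]
  | add p q hp hq => simp only [map_add, hp, hq]
  | mul_X p k hp =>
    simp only [map_mul, Derivation.leibniz, smul_eq_mul, map_add, hp]
    by_cases h : k = j
    · subst h; simp [rho_X_self, pderiv_X_of_ne hij.symm]
    · rw [rho_X_ne h]
      by_cases h' : k = i
      · subst h'; simp
      · simp [pderiv_X_of_ne h']

theorem pderiv_rho_self (j : Fin 3) (p : R3) : pderiv j (rho j p) = 0 := by
  induction p using MvPolynomial.induction_on with
  | C a => simp [rho]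
  | add p q hp hq => simp only [map_add, hp, hq, add_zero]
  | mul_X p k hp =>
    simp only [map_mul, Derivation.leibniz, smul_eq_mul, hp]
    by_cases h : k = j
    · subst h; simp [rho_X_self]
    · simp [rho_X_ne h, pderiv_X_of_ne h]

theorem rho_tau {i j : Fin 3} (p : R3) : rho j (tau i j p) = rho j p := by
  have : (rho j).comp (tau i j) = rho j := by
    apply MvPolynomial.algHom_ext
    intro k
    by_cases h : k = i
    · subst h
      rw [AlgHom.comp_apply, tau_X_self, map_add, rho_X_self, add_zero]
    · simp [tau_X_ne h]
  exact DFunLike.congr_fun this p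

theorem pderiv_rho_inv {i j : Fin 3} (hij : i ≠ j) {p : R3} (hp : tau i j p = p) :
    pderiv i (rho j p) = 0 := by
  have h := congrArg (rho j) (pderiv_tau hij p)
  rw [hp, map_add, rho_tau, rho_tau] at h
  rw [pderiv_rho hij]
  simpa using h

theorem exists_sq (p : R3) (h : ∀ i, pderiv i p = 0) : ∃ q : R3, p = q ^ 2 := by
  have hev : ∀ m ∈ p.support, ∀ i, Even (m i) := by
    intro m hm i
    by_contra hodd
    rw [Nat.not_even_iff_odd] at hodd
    obtain ⟨k, hk⟩ := hodd
    have h1 := congrArg (coeff (m - Finsupp.single i 1)) (h i)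
    rw [coeff_pderiv, tsub_add_cancel_of_le (by simp [hk])] at h1
    have h2 : (((m - Finsupp.single i 1 : Fin 3 →₀ ℕ) i : ℕ) : F2) + 1 = 1 := by
      have : (m - Finsupp.single i 1 : Fin 3 →₀ ℕ) i = 2 * k := by simp [hk]
      rw [this]; push_cast
      have : (2 : F2) = 0 := rfl
      rw [this]; simp
    rw [h2, mul_one, coeff_zero] at h1
    exact (mem_support_iff.1 hm) h1
  refine ⟨∑ m ∈ p.support, monomial (m.mapRange (· / 2) (by simp)) (coeff m p), ?_⟩
  rw [sum_pow_char]
  conv_lhs => rw [p.as_sum]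
  refine Finset.sum_congr rfl fun m hm => ?_
  rw [monomial_pow]
  congr 1
  · have : 2 • m.mapRange (· / 2) (by simp) = m := by
      ext i
      obtain ⟨t, ht⟩ := hev m hm i
      simp only [Finsupp.smul_apply, Finsupp.mapRange_apply, smul_eq_mul, ht]
      omega
    rw [this]
  · exact (ZMod.pow_card (coeff m p)).symm

theorem sq_inj {p q : R3} (h : p ^ 2 = q ^ 2) : p = q := by
  have : (p + q) ^ 2 = 0 := by rw [CharTwo.add_sq, h, two_R3]
  have := pow_eq_zero_iff (two_ne_zero) |>.1 this
  exact CharTwo.add_eq_zero.1 this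

theorem totalDegree_aeval_le' (k : ℕ) (φ : Fin 3 → R3) (hφ : ∀ i, (φ i).totalDegree ≤ k)
    (p : R3) : (aeval φ p).totalDegree ≤ k * p.totalDegree := by
  rw [aeval_def, eval₂_eq']
  refine totalDegree_finsetSum_le fun m hm => ?_
  refine (totalDegree_mul _ _).trans ?_
  rw [algebraMap_eq, totalDegree_C, zero_add]
  refine (totalDegree_finsetProd _ _).trans ?_
  refine (Finset.sum_le_sum fun i _ => (totalDegree_pow _ _).trans
    (Nat.mul_le_mul_left _ (hφ i))).trans ?_
  rw [← Finset.sum_mul, mul_comm]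
  refine Nat.mul_le_mul_left _ ?_
  have := le_totalDegree hm
  rwa [Finsupp.sum_fintype _ _ (fun _ => rfl)] at this

theorem prime_tau {i j : Fin 3} (hij : i ≠ j) {p : R3} (hp : Prime p) : Prime (tau i j p) := by
  refine comap_prime (tau i j) (tau i j) (fun a => tau_tau hij a) ?_
  rwa [tau_tau hij]

theorem step_dvd {P L w : R3} (hL : Prime L) (h1 : P ∣ w) (h2 : L ∣ w) (h3 : ¬ L ∣ P) :
    P * L ∣ w := by
  obtain ⟨k, rfl⟩ := h1
  exact mul_dvd_mul_left P ((hL.dvd_or_dvd h2).resolve_left h3)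

theorem not_dvd_eval (v : Fin 3 → F2) {P L : R3} (h1 : eval v L = 0) (h2 : eval v P ≠ 0) :
    ¬ L ∣ P := by
  rintro ⟨k, rfl⟩
  exact h2 (by rw [map_mul, h1, zero_mul])

theorem rho_tau_comm {i j k : Fin 3} (hik : i ≠ k) (hjk : j ≠ k) (p : R3) :
    rho k (tau i j p) = tau i j (rho k p) := by
  have : (rho k).comp (tau i j) = (tau i j).comp (rho k) := by
    apply MvPolynomial.algHom_ext
    intro l
    by_cases h : l = i
    · subst h
      simp [tau_X_self, rho_X_ne hik, rho_X_ne hjk]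
    · by_cases h' : l = k
      · subst h'; simp [tau_X_ne h, rho_X_self]
      · simp [tau_X_ne h, rho_X_ne h']
  exact DFunLike.congr_fun this p

theorem rho_comm {i j : Fin 3} (p : R3) : rho i (rho j p) = rho j (rho i p) := by
  have : (rho i).comp (rho j) = (rho j).comp (rho i) := by
    apply MvPolynomial.algHom_ext
    intro l
    by_cases h : l = i
    · subst h
      by_cases h' : l = j
      · subst h'; rfl
      · simp [rho_X_ne h', rho_X_self]
    · by_cases h' : l = j
      · subst h'; simp [rho_X_ne h, rho_X_self]
      · simp [rho_X_ne h, rho_X_ne h']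
  exact DFunLike.congr_fun this p

theorem dvd_tau {i j : Fin 3} {L w : R3} (hw : tau i j w = w) (h : L ∣ w) : tau i j L ∣ w := by
  rw [← hw]; exact map_dvd (tau i j) h

theorem inv_cancel {P h : R3} {φ : R3 →ₐ[F2] R3} (hP0 : P ≠ 0) (hP : φ P = P)
    (hw : φ (P * h) = P * h) : φ h = h := by
  rw [map_mul, hP] at hw
  exact mul_left_cancel₀ hP0 hw

/-- x^2+xy+y^2 -/
noncomputable def dd2 : R3 := X 0 ^ 2 + X 0 * X 1 + X 1 ^ 2

/-- xy(x+y) -/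
noncomputable def dd3 : R3 := X 0 * X 1 * (X 0 + X 1)

/-- dk4 in the variables -/
noncomputable def e4 : R3 := dk4 (X 0) (X 1) (X 2)

/-- dk6 in the variables -/
noncomputable def e6 : R3 := dk6 (X 0) (X 1) (X 2)

/-- dk7 in the variables -/
noncomputable def e7 : R3 := dk7 (X 0) (X 1) (X 2)

theorem prime_X01 : Prime (X 0 + X 1 : R3) := by
  have := prime_tau (i := 0) (j := 1) (by decide) (X_prime (R := F2) (i := (0 : Fin 3)))
  rwa [tau_X_self] at this

theorem prime_X02 : Prime (X 0 + X 2 : R3) := by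
  have := prime_tau (i := 0) (j := 2) (by decide) (X_prime (R := F2) (i := (0 : Fin 3)))
  rwa [tau_X_self] at this

theorem prime_X12 : Prime (X 1 + X 2 : R3) := by
  have := prime_tau (i := 1) (j := 2) (by decide) (X_prime (R := F2) (i := (1 : Fin 3)))
  rwa [tau_X_self] at this

theorem prime_X012 : Prime (X 0 + X 1 + X 2 : R3) := by
  have := prime_tau (i := 1) (j := 2) (by decide) prime_X01
  rwa [map_add, tau_X_self, tau_X_ne (by decide), ← add_assoc] at this

theorem dd3_dvd {w : R3} (h1 : X 1 ∣ w) (t01 : tau 0 1 w = w) (t10 : tau 1 0 w = w) :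
    dd3 ∣ w := by
  have h01 : (X 0 + X 1 : R3) ∣ w := by
    have := dvd_tau t10 h1
    rwa [tau_X_self, add_comm] at this
  have h0 : (X 0 : R3) ∣ w := by
    have := dvd_tau t01 h01
    rwa [map_add, tau_X_self, tau_X_ne (by decide), add_assoc, two_R3, add_zero] at this
  refine step_dvd prime_X01 (step_dvd X_prime h0 h1 ?_) h01 ?_
  · exact not_dvd_eval ![1,0,0] (by simp) (by simp)
  · rw [prime_X01.dvd_mul, not_or]
    exact ⟨not_dvd_eval ![1,1,0] (by simp; decide) (by simp),
      not_dvd_eval ![1,1,0] (by simp; decide) (by simp)⟩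

theorem e7_dvd {w : R3} (h2 : X 2 ∣ w) (ht : ∀ i j, i ≠ j → tau i j w = w) : e7 ∣ w := by
  have h12 : (X 1 + X 2 : R3) ∣ w := by
    have := dvd_tau (ht 2 1 (by decide)) h2
    rwa [tau_X_self, add_comm] at this
  have h02 : (X 0 + X 2 : R3) ∣ w := by
    have := dvd_tau (ht 2 0 (by decide)) h2
    rwa [tau_X_self, add_comm] at this
  have h012 : (X 0 + X 1 + X 2 : R3) ∣ w := by
    have := dvd_tau (ht 0 1 (by decide)) h02
    rwa [map_add, tau_X_self, tau_X_ne (by decide)] at this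
  have h1 : (X 1 : R3) ∣ w := by
    have := dvd_tau (ht 1 2 (by decide)) h12
    rwa [map_add, tau_X_self, tau_X_ne (by decide), add_assoc, two_R3, add_zero] at this
  have h : dd3 ∣ w := dd3_dvd h1 (ht _ _ (by decide)) (ht _ _ (by decide))
  unfold e7 dk7
  refine step_dvd prime_X012 (step_dvd prime_X12 (step_dvd prime_X02 (step_dvd X_prime h h2 ?_)
    h02 ?_) h12 ?_) h012 ?_
  all_goals
    simp only [dd3, (X_prime (R := F2) (i := (2 : Fin 3))).dvd_mul, prime_X012.dvd_mul,
      prime_X12.dvd_mul, prime_X02.dvd_mul, not_or]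
    repeat' constructor
  all_goals first
    | exact not_dvd_eval ![1,0,0] (by simp only [map_add, eval_X]; decide) (by simp only [map_add, eval_X]; decide)
    | exact not_dvd_eval ![0,1,0] (by simp only [map_add, eval_X]; decide) (by simp only [map_add, eval_X]; decide)
    | exact not_dvd_eval ![1,1,0] (by simp only [map_add, eval_X]; decide) (by simp only [map_add, eval_X]; decide)
    | exact not_dvd_eval ![1,0,1] (by simp only [map_add, eval_X]; decide) (by simp only [map_add, eval_X]; decide)
    | exact not_dvd_eval ![0,1,1] (by simp only [map_add, eval_X]; decide) (by simp only [map_add, eval_X]; decide)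

theorem hX (i : Fin 3) : (X i : R3).IsHomogeneous 1 := isHomogeneous_X _ _

theorem dd3_ne : dd3 ≠ 0 :=
  mul_ne_zero (mul_ne_zero (X_ne_zero _) (X_ne_zero _)) prime_X01.ne_zero

theorem e7_ne : e7 ≠ 0 :=
  mul_ne_zero (mul_ne_zero (mul_ne_zero (mul_ne_zero dd3_ne (X_ne_zero _)) prime_X02.ne_zero)
    prime_X12.ne_zero) prime_X012.ne_zero

theorem dd3_hom : dd3.IsHomogeneous 3 := ((hX 0).mul (hX 1)).mul ((hX 0).add (hX 1))

theorem e7_hom : e7.IsHomogeneous 7 :=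
  (((dd3_hom.mul (hX 2)).mul ((hX 0).add (hX 2))).mul ((hX 1).add (hX 2))).mul
    (((hX 0).add (hX 1)).add (hX 2))

theorem dd2_hom : dd2.IsHomogeneous 2 :=
  (((hX 0).pow 2).add ((hX 0).mul (hX 1))).add ((hX 1).pow 2)

theorem e4_hom : e4.IsHomogeneous 4 := by
  unfold e4 dk4
  have h (i) (n) := (hX i).pow n
  refine ((((((((h 0 4).add ((h 0 2).mul (h 1 2))).add (((h 0 2).mul (hX 1)).mul (hX 2))).add
    ((h 0 2).mul (h 2 2))).add (((hX 0).mul (h 1 2)).mul (hX 2))).add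
    (((hX 0).mul (hX 1)).mul (h 2 2))).add (h 1 4)).add ((h 1 2).mul (h 2 2))).add (h 2 4)

theorem e6_hom : e6.IsHomogeneous 6 := by
  unfold e6 dk6
  have h (i) (n) := (hX i).pow n
  exact (((((((((((h 0 4).mul (h 1 2)).add ((h 0 2).mul (h 1 4))).add ((h 0 4).mul (h 2 2))).add
    ((h 0 2).mul (h 2 4))).add ((h 1 4).mul (h 2 2))).add ((h 1 2).mul (h 2 4))).add
    (((h 0 4).mul (hX 1)).mul (hX 2))).add (((hX 0).mul (h 1 4)).mul (hX 2))).add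
    (((hX 0).mul (hX 1)).mul (h 2 4))).add (((h 0 2).mul (h 1 2)).mul (h 2 2)))

theorem tau_dd2 : tau 0 1 dd2 = dd2 ∧ tau 1 0 dd2 = dd2 ∧ rho 2 dd2 = dd2 ∧
    rho 1 dd2 = X 0 ^ 2 := by
  have h2 : (2 : R3) = 0 := CharTwo.two_eq_zero
  unfold dd2
  simp only [map_add, map_mul, map_pow, tau_X_self,
    tau_X_ne (by decide : (1 : Fin 3) ≠ 0), tau_X_ne (by decide : (0 : Fin 3) ≠ 1),
    rho_X_ne (by decide : (0 : Fin 3) ≠ 2), rho_X_ne (by decide : (1 : Fin 3) ≠ 2), rho_X_self,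
    rho_X_ne (by decide : (0 : Fin 3) ≠ 1)]
  refine ⟨?_, ?_, ?_, ?_⟩ <;> grind

theorem tau_dd3 : tau 0 1 dd3 = dd3 ∧ tau 1 0 dd3 = dd3 ∧ rho 2 dd3 = dd3 ∧ rho 1 dd3 = 0 := by
  have h2 : (2 : R3) = 0 := CharTwo.two_eq_zero
  unfold dd3
  simp only [map_add, map_mul, map_pow, tau_X_self,
    tau_X_ne (by decide : (1 : Fin 3) ≠ 0), tau_X_ne (by decide : (0 : Fin 3) ≠ 1),
    rho_X_ne (by decide : (0 : Fin 3) ≠ 2), rho_X_ne (by decide : (1 : Fin 3) ≠ 2), rho_X_self,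
    rho_X_ne (by decide : (0 : Fin 3) ≠ 1)]
  refine ⟨?_, ?_, ?_, ?_⟩ <;> grind

theorem rho_e : rho 2 e4 = dd2 ^ 2 ∧ rho 2 e6 = dd3 ^ 2 := by
  have h2 : (2 : R3) = 0 := CharTwo.two_eq_zero
  unfold e4 e6 dk4 dk6 dd2 dd3
  simp only [map_add, map_mul, map_pow,
    rho_X_ne (by decide : (0 : Fin 3) ≠ 2), rho_X_ne (by decide : (1 : Fin 3) ≠ 2), rho_X_self]
  refine ⟨?_, ?_⟩ <;> grind

/-- substitute for x -/
noncomputable def subx (p : R3) : R3 →ₐ[F2] R3 := aeval ![p, 0, 0]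

theorem comp_subx (φ : R3 →ₐ[F2] R3) (p u : R3) : φ (subx p u) = subx (φ p) u := by
  have : φ.comp (subx p) = subx (φ p) := by
    apply MvPolynomial.algHom_ext
    intro k
    fin_cases k <;> simp [subx]
  exact DFunLike.congr_fun this u

theorem subx_sq (p u : R3) : subx (p ^ 2) u = (subx p u) ^ 2 := by
  have : subx (p ^ 2) = (subx p).comp (expand 2) := by
    apply MvPolynomial.algHom_ext
    intro k
    fin_cases k <;> simp [subx]
  rw [this, AlgHom.comp_apply, expand_zmod, map_pow]

theorem subx_X (u : R3) : subx (X 0) u = rho 1 (rho 2 u) := by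
  have : subx (X 0) = (rho 1).comp (rho 2) := by
    apply MvPolynomial.algHom_ext
    intro k
    fin_cases k <;> simp [subx, rho]
  exact DFunLike.congr_fun this u

theorem subx_mem (S : Subalgebra F2 R3) {p : R3} (hp : p ∈ S) (u : R3) : subx p u ∈ S := by
  induction u using MvPolynomial.induction_on with
  | C a => simpa [subx] using S.algebraMap_mem a
  | add p q hp hq => rw [map_add]; exact S.add_mem hp hq
  | mul_X q k hq =>
    rw [map_mul]
    refine S.mul_mem hq ?_
    fin_cases k <;> simp [subx, hp]

theorem subx_deg {p : R3} {k : ℕ} (hp : p.totalDegree ≤ k) (u : R3) :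
    (subx p u).totalDegree ≤ k * u.totalDegree := by
  apply totalDegree_aeval_le'
  intro i
  fin_cases i <;> simp [hp]

theorem deg_sq (u : R3) : (u ^ 2).totalDegree = 2 * u.totalDegree := by
  by_cases h : u = 0
  · simp [h]
  · rw [sq, totalDegree_mul_of_isDomain h h]; ring

theorem rho_deg (j : Fin 3) (u : R3) : (rho j u).totalDegree ≤ u.totalDegree := by
  have := totalDegree_aeval_le' 1 (Function.update X j 0 : Fin 3 → R3) (by
    intro i
    by_cases h : i = j
    · subst h; simp
    · simp [h]) u
  simpa [rho] using this

theorem stage2 (S : Subalgebra F2 R3) (h4 : e4 ∈ S) (h6 : e6 ∈ S) (n : ℕ) :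
    ∀ g : R3, g.totalDegree ≤ n → rho 2 g = g → tau 0 1 g = g → tau 1 0 g = g →
      ∃ r ∈ S, r.totalDegree ≤ 2 * n ∧ rho 2 r = g ^ 2 := by
  induction n using Nat.strong_induction_on with
  | _ n ih =>
  intro g hg hr h01 h10
  obtain ⟨u, hu⟩ : ∃ u : R3, rho 1 g = u ^ 2 := by
    apply exists_sq
    intro i
    fin_cases i
    · exact pderiv_rho_inv (by decide) h01
    · exact pderiv_rho_self _ _
    · change pderiv 2 (rho 1 g) = 0
      rw [← hr, rho_comm]; exact pderiv_rho_self _ _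
  have hu1 : rho 1 u = u := by
    apply sq_inj; rw [← map_pow, ← hu, rho_rho]
  have hu2 : rho 2 u = u := by
    apply sq_inj; rw [← map_pow, ← hu, rho_comm, hr]
  have hdu : 2 * u.totalDegree ≤ n := by
    rw [← deg_sq, ← hu]; exact (rho_deg _ _).trans hg
  obtain ⟨a1, a2, a3, a4⟩ := tau_dd2
  obtain ⟨b1, b2, b3, b4⟩ := tau_dd3
  obtain ⟨c1, c2⟩ := rho_e
  have w1 : rho 1 (g - subx dd2 u) = 0 := by
    rw [map_sub, comp_subx, a4, subx_sq, subx_X, hu2, hu1, hu, sub_self]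
  have w2 : tau 0 1 (g - subx dd2 u) = g - subx dd2 u := by rw [map_sub, comp_subx, a1, h01]
  have w3 : tau 1 0 (g - subx dd2 u) = g - subx dd2 u := by rw [map_sub, comp_subx, a2, h10]
  have w4 : rho 2 (g - subx dd2 u) = g - subx dd2 u := by rw [map_sub, comp_subx, a3, hr]
  have w5 : (g - subx dd2 u).totalDegree ≤ n := by
    refine (totalDegree_sub _ _).trans (max_le hg ?_)
    exact (subx_deg dd2_hom.totalDegree_le u).trans hdu
  have hd4 : (subx e4 u).totalDegree ≤ 2 * n :=
    (subx_deg e4_hom.totalDegree_le u).trans (by omega)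
  obtain ⟨h, hh⟩ := dd3_dvd (dvd_of_rho w1) w2 w3
  rw [hh] at w2 w3 w4 w5
  have hg' : g = subx dd2 u + dd3 * h := by rw [← hh]; ring
  by_cases h0 : h = 0
  · refine ⟨subx e4 u, subx_mem S h4 u, hd4, ?_⟩
    rw [comp_subx, c1, subx_sq, hg', h0, mul_zero, add_zero]
  · rw [totalDegree_mul_of_isDomain dd3_ne h0, dd3_hom.totalDegree dd3_ne] at w5
    obtain ⟨r, hrS, hrd, hrr⟩ := ih (n - 3) (by omega) h (by omega) (inv_cancel dd3_ne b3 w4)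
      (inv_cancel dd3_ne b1 w2) (inv_cancel dd3_ne b2 w3)
    refine ⟨subx e4 u + e6 * r, S.add_mem (subx_mem S h4 u) (S.mul_mem h6 hrS), ?_, ?_⟩
    · refine (totalDegree_add _ _).trans (max_le hd4 ?_)
      refine (totalDegree_mul _ _).trans ?_
      have := e6_hom.totalDegree_le
      omega
    · rw [map_add, map_mul, comp_subx, c1, c2, subx_sq, hrr, hg', CharTwo.add_sq, mul_pow]

theorem stage3 (S : Subalgebra F2 R3) (h4 : e4 ∈ S) (h6 : e6 ∈ S) (h7 : e7 ∈ S)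
    (hS : ∀ p ∈ S, ∀ i j, i ≠ j → tau i j p = p) (n : ℕ) :
    ∀ f : R3, f.totalDegree ≤ n → (∀ i j, i ≠ j → tau i j f = f) → f ∈ S := by
  induction n using Nat.strong_induction_on with
  | _ n ih =>
  intro f hf ht
  obtain ⟨g, hg⟩ : ∃ u : R3, rho 2 f = u ^ 2 := by
    apply exists_sq
    intro i
    by_cases h : i = 2
    · subst h; exact pderiv_rho_self _ _
    · exact pderiv_rho_inv h (ht _ _ h)
  have hg2 : rho 2 g = g := by
    apply sq_inj; rw [← map_pow, ← hg, rho_rho]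
  have hg01 : tau 0 1 g = g := by
    apply sq_inj; rw [← map_pow, ← hg, ← rho_tau_comm (by decide) (by decide), ht _ _ (by decide)]
  have hg10 : tau 1 0 g = g := by
    apply sq_inj; rw [← map_pow, ← hg, ← rho_tau_comm (by decide) (by decide), ht _ _ (by decide)]
  have hdg : 2 * g.totalDegree ≤ n := by
    rw [← deg_sq, ← hg]; exact (rho_deg _ _).trans hf
  obtain ⟨r, hrS, hrd, hrr⟩ := stage2 S h4 h6 _ g le_rfl hg2 hg01 hg10
  have w1 : rho 2 (f - r) = 0 := by rw [map_sub, hg, hrr, sub_self]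
  have w2 : ∀ i j, i ≠ j → tau i j (f - r) = f - r := by
    intro i j hij; rw [map_sub, ht i j hij, hS r hrS i j hij]
  have w3 : (f - r).totalDegree ≤ n :=
    (totalDegree_sub _ _).trans (max_le hf (hrd.trans hdg))
  obtain ⟨h, hh⟩ := e7_dvd (dvd_of_rho w1) w2
  have hf' : f = r + e7 * h := by rw [← hh]; ring
  rw [hf']
  refine S.add_mem hrS ?_
  by_cases h0 : h = 0
  · rw [h0, mul_zero]; exact S.zero_mem
  · rw [hh] at w2 w3
    rw [totalDegree_mul_of_isDomain e7_ne h0, e7_hom.totalDegree e7_ne] at w3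
    exact S.mul_mem h7 (ih (n - 7) (by omega) h (by omega)
      (fun i j hij => inv_cancel e7_ne (hS _ h7 i j hij) (w2 i j hij)))

/-- The total Steenrod square. -/
noncomputable def Sq {n : ℕ} : MvPolynomial (Fin n) F2 →ₐ[F2] Polynomial (MvPolynomial (Fin n) F2) :=
  aeval (fun i => Polynomial.C (X i) + Polynomial.X * Polynomial.C (X i ^ 2))

theorem Sq_comm {n m : ℕ} (φ : MvPolynomial (Fin n) F2 →ₐ[F2] MvPolynomial (Fin m) F2)
    (hφ : ∀ i, Sq (φ (X i)) =
      Polynomial.C (φ (X i)) + Polynomial.X * Polynomial.C (φ (X i) ^ 2))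
    (p : MvPolynomial (Fin n) F2) (k : ℕ) :
    (Sq (φ p)).coeff k = φ ((Sq p).coeff k) := by
  have : Sq.comp φ = (Polynomial.mapAlgHom φ).comp Sq := by
    apply MvPolynomial.algHom_ext
    intro i
    rw [AlgHom.comp_apply, hφ, AlgHom.comp_apply]
    simp [Sq]
  have h2 := congrArg (fun q => Polynomial.coeff q k) (DFunLike.congr_fun this p)
  simpa using h2

theorem Sq_X {n : ℕ} (i : Fin n) : Sq (X i : MvPolynomial (Fin n) F2) =
    Polynomial.C (X i) + Polynomial.X * Polynomial.C (X i ^ 2) := by simp [Sq]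

theorem Sq_lin_add {n : ℕ} {p q : MvPolynomial (Fin n) F2}
    (hp : Sq p = Polynomial.C p + Polynomial.X * Polynomial.C (p ^ 2))
    (hq : Sq q = Polynomial.C q + Polynomial.X * Polynomial.C (q ^ 2)) :
    Sq (p + q) = Polynomial.C (p + q) + Polynomial.X * Polynomial.C ((p + q) ^ 2) := by
  rw [map_add, hp, hq, CharTwo.add_sq, Polynomial.C_add, Polynomial.C_add]; ring

theorem Sq_lin_zero {n : ℕ} : Sq (0 : MvPolynomial (Fin n) F2) =
    Polynomial.C 0 + Polynomial.X * Polynomial.C (0 ^ 2) := by simp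

theorem Sq_TT {n : ℕ} (M : Matrix (Fin n) (Fin n) F2) (i : Fin n) : Sq (TT M (X i)) =
    Polynomial.C (TT M (X i)) + Polynomial.X * Polynomial.C (TT M (X i) ^ 2) := by
  simp only [TT, aeval_X]
  induction (Finset.univ : Finset (Fin n)) using Finset.induction_on with
  | empty => simp
  | insert a s ha ih =>
    rw [Finset.sum_insert ha]
    refine Sq_lin_add ?_ ih
    rcases (by decide : ∀ a : F2, a = 0 ∨ a = 1) (M i a) with h | h
    · rw [h, zero_smul]; exact Sq_lin_zero
    · rw [h, one_smul]; exact Sq_X a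

theorem Sq_pi (i : Fin 6) : Sq (piMap (X i)) =
    Polynomial.C (piMap (X i)) + Polynomial.X * Polynomial.C (piMap (X i) ^ 2) := by
  fin_cases i
  · simpa [piMap] using Sq_X (0 : Fin 3)
  · simpa [piMap] using Sq_X (1 : Fin 3)
  · simpa [piMap] using Sq_X (2 : Fin 3)
  all_goals simp [piMap]

theorem Sq_e4 : Sq e4 = Polynomial.C e4 + Polynomial.X ^ 2 * Polynomial.C e6 +
    Polynomial.X ^ 3 * Polynomial.C e7 + Polynomial.X ^ 4 * Polynomial.C (e4 ^ 2) := by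
  have h := dk4_sq (Polynomial.C (X 0 : R3)) (Polynomial.C (X 1)) (Polynomial.C (X 2))
    Polynomial.X
  have h1 : Sq e4 = dk4 (Sq (X 0)) (Sq (X 1)) (Sq (X 2)) := by
    simp only [e4, dk4, map_add, map_mul, map_pow]
  rw [h1, Sq_X, Sq_X, Sq_X]
  simp only [Polynomial.C_pow]
  rw [h]
  simp only [e4, e6, e7, dk4, dk6, dk7, Polynomial.C_add, Polynomial.C_mul, Polynomial.C_pow]

/-- the lift of e4 -/
noncomputable def P4 : MvPolynomial (Fin 6) F2 := lift4 (X 0) (X 1) (X 2) (X 3) (X 4) (X 5)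

theorem TT_P4 (M : Matrix (Fin 6) (Fin 6) F2) : TT M P4 = lift4 (TT M (X 0)) (TT M (X 1))
    (TT M (X 2)) (TT M (X 3)) (TT M (X 4)) (TT M (X 5)) := by
  simp only [P4, lift4, map_add, map_mul, map_pow]

theorem TT_A : TT DA6 P4 = P4 := by
  have h0 : TT DA6 (X 0) = X 0 + X 2 + X 5 := by simp [TT, DA6, Fin.sum_univ_succ]; ring
  have h1 : TT DA6 (X 1) = X 1 := by simp [TT, DA6, Fin.sum_univ_succ]
  have h2 : TT DA6 (X 2) = X 2 := by simp [TT, DA6, Fin.sum_univ_succ]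
  have h3 : TT DA6 (X 3) = X 3 + X 4 := by simp [TT, DA6, Fin.sum_univ_succ]
  have h4 : TT DA6 (X 4) = X 4 := by simp [TT, DA6, Fin.sum_univ_succ]
  have h5 : TT DA6 (X 5) = X 5 := by simp [TT, DA6, Fin.sum_univ_succ]
  rw [TT_P4, h0, h1, h2, h3, h4, h5]
  exact lift4_A _ _ _ _ _ _

theorem TT_B : TT DB6 P4 = P4 := by
  have h0 : TT DB6 (X 0) = X 2 := by simp [TT, DB6, Fin.sum_univ_succ]
  have h1 : TT DB6 (X 1) = X 0 := by simp [TT, DB6, Fin.sum_univ_succ]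
  have h2 : TT DB6 (X 2) = X 1 := by simp [TT, DB6, Fin.sum_univ_succ]
  have h3 : TT DB6 (X 3) = X 5 := by simp [TT, DB6, Fin.sum_univ_succ]
  have h4 : TT DB6 (X 4) = X 3 := by simp [TT, DB6, Fin.sum_univ_succ]
  have h5 : TT DB6 (X 5) = X 4 := by simp [TT, DB6, Fin.sum_univ_succ]
  rw [TT_P4, h0, h1, h2, h3, h4, h5]
  exact lift4_B _ _ _ _ _ _

theorem pi_P4 : piMap P4 = e4 := by
  have : piMap P4 = lift4 (X 0) (X 1) (X 2) 0 0 0 := by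
    simp only [P4, lift4, map_add, map_mul, map_pow]
    simp [piMap]
  rw [this]; exact lift4_pi _ _ _

theorem pi_A (p : MvPolynomial (Fin 6) F2) :
    piMap (TT DA6 p) = TT (Agen : Matrix (Fin 3) (Fin 3) F2) (piMap p) := by
  have : piMap.comp (TT DA6) = (TT (Agen : Matrix (Fin 3) (Fin 3) F2)).comp piMap := by
    apply MvPolynomial.algHom_ext
    intro i
    fin_cases i <;> simp [TT, DA6, Agen, piMap, Fin.sum_univ_succ]
  exact DFunLike.congr_fun this p

theorem pi_B (p : MvPolynomial (Fin 6) F2) :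
    piMap (TT DB6 p) = TT (Bgen : Matrix (Fin 3) (Fin 3) F2) (piMap p) := by
  have : piMap.comp (TT DB6) = (TT (Bgen : Matrix (Fin 3) (Fin 3) F2)).comp piMap := by
    apply MvPolynomial.algHom_ext
    intro i
    fin_cases i <;> simp [TT, DB6, Bgen, piMap, Fin.sum_univ_succ]
  exact DFunLike.congr_fun this p

theorem mem_invG {D : G3 →* GL (Fin 6) F2}
    (hA : (D Agen : Matrix (Fin 6) (Fin 6) F2) = DA6)
    (hB : (D Bgen : Matrix (Fin 6) (Fin 6) F2) = DB6) {p : MvPolynomial (Fin 6) F2}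
    (h1 : TT DA6 p = p) (h2 : TT DB6 p = p) : p ∈ invG D := by
  intro σ _
  refine gen_top (stabG D p) ?_ ?_ σ
  · change TT _ p = p
    rw [hA, h1]
  · change TT _ p = p
    rw [hB, h2]

theorem of_mem_invG {D : G3 →* GL (Fin 6) F2}
    (hA : (D Agen : Matrix (Fin 6) (Fin 6) F2) = DA6)
    (hB : (D Bgen : Matrix (Fin 6) (Fin 6) F2) = DB6) {p : MvPolynomial (Fin 6) F2}
    (h : p ∈ invG D) (σ : G3) : TT (σ : Matrix (Fin 3) (Fin 3) F2) (piMap p) = piMap p := by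
  have h1 : TT DA6 p = p := by rw [← hA]; exact h Agen trivial
  have h2 : TT DB6 p = p := by rw [← hB]; exact h Bgen trivial
  refine gen_top (stabG (MonoidHom.id G3) (piMap p)) ?_ ?_ σ
  · change TT _ (piMap p) = piMap p
    rw [MonoidHom.id_apply, ← pi_A, h1]
  · change TT _ (piMap p) = piMap p
    rw [MonoidHom.id_apply, ← pi_B, h2]

/-- Transposed group element. -/
def trG (σ : G3) : G3 :=
  ⟨(σ : Matrix (Fin 3) (Fin 3) F2).transpose, ((σ⁻¹ : G3) : Matrix (Fin 3) (Fin 3) F2).transpose,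
    by rw [← Matrix.transpose_mul, ← Units.val_mul, inv_mul_cancel, Units.val_one,
      Matrix.transpose_one],
    by rw [← Matrix.transpose_mul, ← Units.val_mul, mul_inv_cancel, Units.val_one,
      Matrix.transpose_one]⟩

/-- Transvection as a group element. -/
noncomputable def tvG (i j : Fin 3) (h : i ≠ j) : G3 :=
  Matrix.GeneralLinearGroup.mkOfDetNeZero (Matrix.transvection i j (1 : F2))
    (by rw [Matrix.det_transvection_of_ne i j h]; exact one_ne_zero)

theorem TT_tv (i j : Fin 3) (h : i ≠ j) :
    TT (tvG i j h : Matrix (Fin 3) (Fin 3) F2) = tau i j := by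
  apply MvPolynomial.algHom_ext
  intro k
  change aeval _ (X k) = _
  rw [aeval_X]
  change ∑ l, (Matrix.transvection i j (1 : F2)) k l • X l = _
  by_cases hk : k = i
  · subst hk
    rw [tau_X_self]
    simp [Matrix.transvection, Matrix.one_apply, Matrix.single_apply, add_smul,
      Finset.sum_add_distrib]
  · rw [tau_X_ne hk]
    simp [Matrix.transvection, Matrix.one_apply, Matrix.single_apply, add_smul,
      Finset.sum_add_distrib, Ne.symm hk]

theorem coeff_e6 : (Sq e4).coeff 2 = e6 := by
  rw [Sq_e4]
  generalize e4 = a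
  generalize e6 = b
  generalize e7 = c
  simp [Polynomial.coeff_X_pow_mul', Polynomial.coeff_C, -map_pow]

theorem coeff_e7 : (Sq e4).coeff 3 = e7 := by
  rw [Sq_e4]
  generalize e4 = a
  generalize e6 = b
  generalize e7 = c
  simp [Polynomial.coeff_X_pow_mul', Polynomial.coeff_C, -map_pow]

/-- `π` maps the invariant ring `S[W'^*]^G` surjectively onto the full
invariant ring `𝔽₂[x,y,z]^{GL₃(𝔽₂)}` of the action of `GL₃(𝔽₂)` on `𝔽₂[x,y,z]` by
linear substitution of the variables (the Dickson algebra): every `GL₃(𝔽₂)`-invariant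
polynomial in `𝔽₂[x,y,z]` is the image under `π` of some element of `S[W'^*]^G`. -/
theorem stmt19 (D : G3 →* GL (Fin 6) F2)
    (hA : (D Agen : Matrix (Fin 6) (Fin 6) F2) = DA6)
    (hB : (D Bgen : Matrix (Fin 6) (Fin 6) F2) = DB6) :
    -- `π` maps `S[W'^*]^G` into the Dickson algebra `𝔽₂[x,y,z]^{GL₃(𝔽₂)}` …
    (∀ p ∈ invG D, ∀ σ : G3,
      aeval (fun i => ∑ j, (σ : Matrix (Fin 3) (Fin 3) F2) j i • X j) (piMap p)
        = piMap p) ∧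
    -- … and surjectively onto it:
    (∀ q : MvPolynomial (Fin 3) F2,
      (∀ σ : G3,
        aeval (fun i => ∑ j, (σ : Matrix (Fin 3) (Fin 3) F2) j i • X j) q = q) →
      ∃ p ∈ invG D, piMap p = q) := by
  constructor
  · intro p hp σ
    exact of_mem_invG hA hB hp (trG σ)
  · intro q hq
    have hmem : ∀ k, (Sq P4).coeff k ∈ invG D := by
      intro k
      apply mem_invG hA hB
      · rw [← Sq_comm _ (Sq_TT _), TT_A]
      · rw [← Sq_comm _ (Sq_TT _), TT_B]
    have hpi : ∀ k, (Sq e4).coeff k ∈ (invG D).map piMap := by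
      intro k
      rw [← pi_P4, Sq_comm piMap Sq_pi P4 k]
      exact Subalgebra.mem_map.2 ⟨_, hmem k, rfl⟩
    have hpi' : ∀ k r, (Sq e4).coeff k = r → r ∈ (invG D).map piMap := by
      intro k r h; rw [← h]; exact hpi k
    have h4 : e4 ∈ (invG D).map piMap :=
      Subalgebra.mem_map.2 ⟨P4, mem_invG hA hB TT_A TT_B, pi_P4⟩
    have h6 : e6 ∈ (invG D).map piMap := by
      exact hpi' 2 _ coeff_e6
    have h7 : e7 ∈ (invG D).map piMap := by
      exact hpi' 3 _ coeff_e7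
    have := stage3 ((invG D).map piMap) h4 h6 h7 (by
      rintro _ ⟨p, hp, rfl⟩ i j hij
      rw [← TT_tv i j hij]
      exact of_mem_invG hA hB hp _) _ q le_rfl (by
      intro i j hij
      rw [← TT_tv i j hij]
      exact hq (trG (tvG i j hij)))
    obtain ⟨p, hp, h⟩ := Subalgebra.mem_map.1 this
    exact ⟨p, hp, h⟩
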